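/- Let h ≥ 2, k ≥ 2, 1 ≤ π < k and let w be a nonnegative integer with w < h−2. If B is a deterministic k-way branching program solving BT^h_2(k) such that (a) |LeftThrifty(q)| ≤ π and |RightThrifty(q)| ≤ π for every state q of B labeled with an internal node variable, and (b) for every input I there are at most w nodes i of T^h such that the computation path of I visits a state q labeled with an i-variable with |RightThrifty(q)| > 1 or |LeftThrifty(q)| > 1, then B has at least k^h / π^{w} states. -/

import Mathlib

/-! Framework: the tree evaluation problem and deterministic k-way branching programs.

The balanced binary tree of height `h` has nodes numbered heap-style `1, …, 2^h - 1`: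
the root is node `1` and the children of node `i` are `2i` and `2i+1`.
Elements of `[k] = {1,…,k}` are represented by `Fin k` (the element `1 ∈ [k]`
corresponds to `(0 : Fin k)`). -/

/-- Node `i` is a leaf of the height-`h` balanced binary tree. -/
def IsLeafNode (h i : ℕ) : Prop := 2 ^ (h - 1) ≤ i ∧ i < 2 ^ h

/-- Node `i` is an internal node of the height-`h` balanced binary tree. -/
def IsInternalNode (h i : ℕ) : Prop := 1 ≤ i ∧ i < 2 ^ (h - 1)

/-- An input to the height-`h` tree evaluation problem over `[k]`: a binary function on `[k]`
for each internal node and a value in `[k]` for each leaf (values at irrelevant indices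
are ignored). -/
structure TEInput (h k : ℕ) where
  f : ℕ → Fin k → Fin k → Fin k
  leaf : ℕ → Fin k

/-- Auxiliary recursion (on fuel) computing node values. -/
def TEInput.valAux {h k : ℕ} (I : TEInput h k) : ℕ → ℕ → Fin k
  | 0, i => I.leaf i
  | m + 1, i =>
      if 2 ^ (h - 1) ≤ i then I.leaf i
      else I.f i (I.valAux m (2 * i)) (I.valAux m (2 * i + 1))

/-- The value `v_i^I` of node `i`: the leaf value if `i` is a leaf, and
`f_i^I (v_{2i}^I, v_{2i+1}^I)` if `i` is an internal node. -/
def TEInput.val {h k : ℕ} (I : TEInput h k) (i : ℕ) : Fin k := I.valAux h i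

/-- The input variables of the tree evaluation problem: one variable `f_i(a,b)` for each
internal node `i` and `a b ∈ [k]`, and one variable `l_i` for each leaf `i`. -/
inductive TEVar (h k : ℕ) where
  | internal (i : ℕ) (hi : IsInternalNode h i) (a b : Fin k) : TEVar h k
  | leaf (i : ℕ) (hi : IsLeafNode h i) : TEVar h k

/-- The value of a variable under an input. -/
def TEInput.evalVar {h k : ℕ} (I : TEInput h k) : TEVar h k → Fin k
  | .internal i _ a b => I.f i a b
  | .leaf i _ => I.leaf i

/-- The node a variable belongs to. -/
def TEVar.node {h k : ℕ} : TEVar h k → ℕ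
  | .internal i _ _ _ => i
  | .leaf i _ => i

/-- `X` is the thrifty `i` variable of input `I`: it is `f_i(v_{2i}^I, v_{2i+1}^I)`
if `i` is an internal node, and `l_i` if `i` is a leaf. -/
def IsThriftyVarOf {h k : ℕ} (I : TEInput h k) (i : ℕ) : TEVar h k → Prop
  | .internal j _ a b => j = i ∧ a = I.val (2 * j) ∧ b = I.val (2 * j + 1)
  | .leaf j _ => j = i

/-- A deterministic `k`-way branching program with variables indexed by `V` and
output set `R`: a set of states (of cardinality `size`), a start state, each state
labeled either with a variable to query (non-output states, with `k` out-edges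
labeled `1,…,k`) or with an output value (output sink states). -/
structure DetBP (V : Type) (k : ℕ) (R : Type) where
  size : ℕ
  start : Fin size
  label : Fin size → V ⊕ R
  next : Fin size → Fin k → Fin size

namespace DetBP

variable {V : Type} {k : ℕ} {R : Type}

/-- One step of computation on input `x`: from a state querying variable `v`, follow
the out-edge labeled `x v`; output states are sinks. -/
def step (B : DetBP V k R) (x : V → Fin k) (s : Fin B.size) : Fin B.size :=
  match B.label s with
  | .inl v => B.next s (x v)
  | .inr _ => s

/-- The state of the computation path of `x` at time `t`. -/
def run (B : DetBP V k R) (x : V → Fin k) (t : ℕ) : Fin B.size :=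
  (B.step x)^[t] B.start

/-- The depth of `B` is at most `D`: on every input, the computation path reaches an
output state within its first `D` states. -/
def DepthLE (B : DetBP V k R) (D : ℕ) : Prop :=
  ∀ x : V → Fin k, ∃ t < D, (B.label (B.run x t)).isRight = true

/-- `B` solves the function tree evaluation problem `FT^h_2(k)`: on every input `I`, the
computation path ends in the output state labeled with the root value `v_1^I`. -/
def SolvesFT {h : ℕ} (B : DetBP (TEVar h k) k (Fin k)) : Prop :=
  ∀ I : TEInput h k, ∃ t, B.label (B.run I.evalVar t) = Sum.inr (I.val 1)

/-- `B` solves the decision tree evaluation problem `BT^h_2(k)`: on every input `I`, the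
computation path ends in the output state labeled with whether `v_1^I = 1`
(the element `1 ∈ [k]` being `(0 : Fin k)`). -/
def SolvesBT {h : ℕ} (B : DetBP (TEVar h k) k Bool) : Prop :=
  ∀ I : TEInput h k, ∃ t, B.label (B.run I.evalVar t) = Sum.inr (decide ((I.val 1 : Fin k).val = 0))

/-- `B` is thrifty: on every input `I`, every query `f_i(a,b)` made along the computation
path of `I` satisfies `a = v_{2i}^I` and `b = v_{2i+1}^I`. -/
def Thrifty {h : ℕ} (B : DetBP (TEVar h k) k R) : Prop :=
  ∀ (I : TEInput h k) (t i : ℕ) (hi : IsInternalNode h i) (a b : Fin k),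
    B.label (B.run I.evalVar t) = Sum.inl (TEVar.internal i hi a b) →
    a = I.val (2 * i) ∧ b = I.val (2 * i + 1)

end DetBP

/-- For a state `q` of `B` labeled with a variable `f_i(a,b)`, `RightThrifty B q i b` is the
set of `a' ∈ [k]` such that some input `I` whose computation path visits `q` satisfies
`v_{2i}^I = a'` and `v_{2i+1}^I = b`. -/
def RightThrifty {h k : ℕ} (B : DetBP (TEVar h k) k Bool) (q : Fin B.size)
    (i : ℕ) (b : Fin k) : Set (Fin k) :=
  {a' | ∃ I : TEInput h k, (∃ t : ℕ, B.run I.evalVar t = q) ∧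
    I.val (2 * i) = a' ∧ I.val (2 * i + 1) = b}

/-- For a state `q` of `B` labeled with a variable `f_i(a,b)`, `LeftThrifty B q i a` is the
set of `b' ∈ [k]` such that some input `I` whose computation path visits `q` satisfies
`v_{2i}^I = a` and `v_{2i+1}^I = b'`. -/
def LeftThrifty {h k : ℕ} (B : DetBP (TEVar h k) k Bool) (q : Fin B.size)
    (i : ℕ) (a : Fin k) : Set (Fin k) :=
  {b' | ∃ I : TEInput h k, (∃ t : ℕ, B.run I.evalVar t = q) ∧
    I.val (2 * i) = a ∧ I.val (2 * i + 1) = b'}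

/-! ### Arithmetic of heap-numbered nodes -/

/-- Node `i` lies in the subtree rooted at `y`. -/
def Desc (y i : ℕ) : Prop := ∃ d, i / 2 ^ d = y

theorem Desc.refl (y : ℕ) : Desc y y := ⟨0, by simp⟩

theorem Desc.of_half {y z i : ℕ} (hz : z / 2 = y) (hi : Desc z i) : Desc y i := by
  obtain ⟨d, hd⟩ := hi
  exact ⟨d + 1, by rw [pow_succ, ← Nat.div_div_eq_div_mul, hd, hz]⟩

theorem Desc.le {y i : ℕ} (hi : Desc y i) : y ≤ i := by
  obtain ⟨d, rfl⟩ := hi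
  exact Nat.div_le_self _ _

/-- The sibling of a node. -/
def sib (i : ℕ) : ℕ := if i % 2 = 0 then i + 1 else i - 1

theorem sib_div_two (i : ℕ) : sib i / 2 = i / 2 := by
  unfold sib; split_ifs <;> omega

theorem sib_sib (i : ℕ) : sib (sib i) = i := by
  unfold sib; split_ifs <;> omega

theorem sib_ne (i : ℕ) : sib i ≠ i := by
  unfold sib; split_ifs <;> omega

/-- The node reached by moving `m` times to the left child from the sibling of the `e`-th
ancestor of `u`. -/
def br (u e m : ℕ) : ℕ := sib (u / 2 ^ e) * 2 ^ m

theorem half_pow (u e : ℕ) : u / 2 ^ e / 2 = u / 2 ^ (e + 1) := by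
  rw [pow_succ, Nat.div_div_eq_div_mul]

theorem br_zero_half (u e : ℕ) : br u e 0 / 2 = u / 2 ^ (e + 1) := by
  simp [br, sib_div_two, half_pow]

theorem br_succ (u e m : ℕ) : br u e (m + 1) = 2 * br u e m := by
  simp only [br, pow_succ]; ring

theorem br_succ_half (u e m : ℕ) : br u e (m + 1) / 2 = br u e m := by
  rw [br_succ]; omega

theorem div_pow_inj {u a b : ℕ} (ha : 0 < u / 2 ^ a) (hab : u / 2 ^ a = u / 2 ^ b) : a = b := by
  have key : ∀ {a b : ℕ}, a < b → 0 < u / 2 ^ a → u / 2 ^ a ≠ u / 2 ^ b := by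
    intro a b h h0
    obtain ⟨c, rfl⟩ := Nat.exists_eq_add_of_lt h
    rw [add_assoc, pow_add, ← Nat.div_div_eq_div_mul]
    exact (Nat.div_lt_self h0 (Nat.one_lt_two_pow (by omega))).ne'
  rcases lt_trichotomy a b with h | h | h
  · exact absurd hab (key h ha)
  · exact h
  · exact absurd hab.symm (key h (hab ▸ ha))

theorem br_div_of_le {u e m d : ℕ} (h : d ≤ m) : br u e m / 2 ^ d = br u e (m - d) := by
  obtain ⟨c, rfl⟩ := Nat.exists_eq_add_of_le h
  simp only [br, Nat.add_sub_cancel_left]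
  rw [Nat.add_comm, pow_add, ← mul_assoc, Nat.mul_div_cancel _ (by positivity)]

theorem br_div_of_lt {u e m d : ℕ} (h : m < d) :
    br u e m / 2 ^ d = u / 2 ^ (e + (d - m)) := by
  obtain ⟨c, rfl⟩ := Nat.exists_eq_add_of_lt h
  have h1 : br u e m / 2 ^ (m + c + 1) = br u e m / 2 ^ m / 2 / 2 ^ c := by
    rw [Nat.div_div_eq_div_mul, Nat.div_div_eq_div_mul]
    congr 1
    ring
  rw [h1, br_div_of_le le_rfl, Nat.sub_self, br_zero_half, Nat.div_div_eq_div_mul, ← pow_add]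
  congr 2
  omega

theorem br_ne_spine {u e m d : ℕ} (hu : 0 < u / 2 ^ (e + 1)) : br u e m ≠ u / 2 ^ d := by
  intro h
  have h1 : br u e 0 = u / 2 ^ (d + m) := by
    rw [pow_add, ← Nat.div_div_eq_div_mul, ← h, br_div_of_le le_rfl, Nat.sub_self]
  have h2 : u / 2 ^ (e + 1) = u / 2 ^ (d + m + 1) := by
    rw [← br_zero_half, h1, half_pow]
  have h3 := div_pow_inj hu h2
  have h4 : d + m = e := by omega
  rw [h4] at h1
  exact sib_ne _ (by simpa [br] using h1)

theorem br_inj {u e m e' m' : ℕ} (hu : 0 < u / 2 ^ (e + 1)) (hu' : 0 < u / 2 ^ (e' + 1))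
    (h : br u e m = br u e' m') : e = e' ∧ m = m' := by
  rcases lt_trichotomy m m' with hm | hm | hm
  · have h1 := congrArg (· / 2 ^ m') h
    simp only [br_div_of_lt hm, br_div_of_le le_rfl] at h1
    exact absurd h1.symm (br_ne_spine hu')
  · subst hm
    have h1 := congrArg (· / 2 ^ (m + 1)) h
    simp only [br_div_of_lt (Nat.lt_succ_self m)] at h1
    simp only [Nat.succ_eq_add_one, Nat.add_sub_cancel_left] at h1
    have := div_pow_inj hu h1
    omega
  · have h1 := congrArg (· / 2 ^ m) h
    simp only [br_div_of_lt hm, br_div_of_le le_rfl] at h1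
    exact absurd h1 (br_ne_spine hu)

theorem Desc.of_br {u e m y : ℕ} (h : Desc y (br u e m)) :
    (∃ m' ≤ m, y = br u e m') ∨ ∃ c, 0 < c ∧ y = u / 2 ^ (e + c) := by
  obtain ⟨d, rfl⟩ := h
  rcases le_or_gt d m with hd | hd
  · exact Or.inl ⟨m - d, by omega, br_div_of_le hd⟩
  · exact Or.inr ⟨d - m, by omega, br_div_of_lt hd⟩

theorem Desc.eq_or_of_half {y i : ℕ} (h : Desc y i) : y = i ∨ ∃ d, y = i / 2 / 2 ^ d := by
  obtain ⟨d, rfl⟩ := h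
  cases d with
  | zero => left; simp
  | succ d => right; exact ⟨d, by rw [pow_succ', Nat.div_div_eq_div_mul]⟩

/-! ### Node values -/

namespace TEInput

variable {h k : ℕ}

theorem valAux_succ_eq (I : TEInput h k) :
    ∀ (m i : ℕ), 2 ^ (h - 1) ≤ i * 2 ^ m → I.valAux (m + 1) i = I.valAux m i := by
  intro m
  induction m with
  | zero =>
    intro i hi
    have : 2 ^ (h - 1) ≤ i := by simpa using hi
    simp [valAux, this]
  | succ m ih =>
    intro i hi
    by_cases hl : 2 ^ (h - 1) ≤ i
    · simp [valAux, hl]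
    · have h1 := ih (2 * i) (hi.trans_eq (by ring))
      have h2 := ih (2 * i + 1) (hi.trans (by rw [pow_succ']; nlinarith [Nat.zero_le (2 ^ m)]))
      rw [valAux, if_neg hl, h1, h2]
      conv_rhs => rw [valAux, if_neg hl]

theorem val_of_le (I : TEInput h k) {i : ℕ} (hi : 2 ^ (h - 1) ≤ i) : I.val i = I.leaf i := by
  unfold val
  cases h with
  | zero => rfl
  | succ m => rw [valAux, if_pos hi]

theorem val_of_internal (I : TEInput h k) {i : ℕ} (h1 : 1 ≤ i) (hi : i < 2 ^ (h - 1)) :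
    I.val i = I.f i (I.val (2 * i)) (I.val (2 * i + 1)) := by
  unfold val
  cases h with
  | zero => simp at hi; omega
  | succ m =>
    have hm : 0 < 2 ^ m := by positivity
    rw [valAux_succ_eq I m (2 * i) (by simp only [Nat.add_sub_cancel]; nlinarith),
      valAux_succ_eq I m (2 * i + 1) (by simp only [Nat.add_sub_cancel]; nlinarith),
      valAux, if_neg (not_le.2 hi)]

theorem val_congr {I J : TEInput h k} {y : ℕ}
    (hIJ : ∀ i, Desc y i → I.f i = J.f i ∧ I.leaf i = J.leaf i) : I.val y = J.val y := by
  have key : ∀ m y, (∀ i, Desc y i → I.f i = J.f i ∧ I.leaf i = J.leaf i) →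
      I.valAux m y = J.valAux m y := by
    intro m
    induction m with
    | zero => exact fun y H => (H y (Desc.refl y)).2
    | succ m ih =>
      intro y H
      simp only [valAux]
      rw [(H y (Desc.refl y)).1, (H y (Desc.refl y)).2,
        ih (2 * y) fun i hi => H i (hi.of_half (by omega)),
        ih (2 * y + 1) fun i hi => H i (hi.of_half (by omega))]
  exact key h y hIJ

/-- The input obtained by giving the thrifty variable of node `x` the value `v`. -/
def setThrifty (I : TEInput h k) (x : ℕ) (v : Fin k) : TEInput h k where
  f i a b := if i = x ∧ a = I.val (2 * x) ∧ b = I.val (2 * x + 1) then v else I.f i a b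
  leaf i := if i = x then v else I.leaf i

theorem setThrifty_val_of_not_desc (I : TEInput h k) {x y : ℕ} (v : Fin k) (hxy : ¬ Desc y x) :
    (I.setThrifty x v).val y = I.val y := by
  apply val_congr
  intro i hi
  have hix : i ≠ x := fun hix => hxy (hix ▸ hi)
  constructor
  · funext a b; simp [setThrifty, hix]
  · simp [setThrifty, hix]

theorem setThrifty_val (I : TEInput h k) {x : ℕ} (hx : 1 ≤ x) (v : Fin k) :
    (I.setThrifty x v).val x = v := by
  rcases le_or_gt (2 ^ (h - 1)) x with hl | hl
  · rw [val_of_le _ hl]; simp [setThrifty]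
  · rw [val_of_internal _ hx hl, setThrifty_val_of_not_desc, setThrifty_val_of_not_desc]
    · simp [setThrifty]
    · intro hd; have := hd.le; omega
    · intro hd; have := hd.le; omega

theorem setThrifty_evalVar (I : TEInput h k) {x : ℕ} (v : Fin k) {X : TEVar h k}
    (hX : ¬ IsThriftyVarOf I x X) : (I.setThrifty x v).evalVar X = I.evalVar X := by
  cases X with
  | internal i hi a b =>
    simp only [evalVar, setThrifty]
    rw [if_neg]
    rintro ⟨rfl, ha, hb⟩
    exact hX ⟨rfl, ha, hb⟩
  | leaf i hi =>
    simp only [evalVar, setThrifty]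
    rw [if_neg]
    rintro rfl
    exact hX rfl

/-- Inputs whose leaf values are read off their function tables, and whose tables vanish
outside the tree; for such inputs leaves and internal nodes obey one recursion. -/
structure Regular [NeZero k] (I : TEInput h k) : Prop where
  leaf_eq : ∀ i, I.leaf i = I.f i 0 0
  f_eq_zero : ∀ i a b, 2 ^ h ≤ i → I.f i a b = 0

theorem Regular.val_eq [NeZero k] {I : TEInput h k} (hI : I.Regular) {i : ℕ} (hi : 1 ≤ i) :
    I.val i = I.f i (I.val (2 * i)) (I.val (2 * i + 1)) := by
  rcases le_or_gt (2 ^ (h - 1)) i with hl | hl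
  · have h2 : 2 ^ h ≤ 2 * i := by
      calc 2 ^ h ≤ 2 ^ (h - 1 + 1) := Nat.pow_le_pow_right (by norm_num) (by omega)
        _ ≤ 2 * i := by rw [pow_succ']; omega
    rw [val_of_le I hl, val_of_le I (i := 2 * i) (by omega),
      val_of_le I (i := 2 * i + 1) (by omega), hI.leaf_eq i, hI.leaf_eq (2 * i),
      hI.leaf_eq (2 * i + 1), hI.f_eq_zero (2 * i) _ _ h2,
      hI.f_eq_zero (2 * i + 1) _ _ (by omega)]
  · exact val_of_internal I hi hl

theorem Regular.val_congr [NeZero k] {I J : TEInput h k} (hI : I.Regular) (hJ : J.Regular)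
    {y : ℕ} (hIJ : ∀ i, Desc y i → I.f i = J.f i) : I.val y = J.val y :=
  TEInput.val_congr fun i hi => ⟨hIJ i hi, by rw [hI.leaf_eq, hJ.leaf_eq, hIJ i hi]⟩

end TEInput

/-! ### Thrifty queries and half-thrifty queries -/

/-- The state reached from `q` after `n` steps on input `I`. -/
def pathFrom {h k : ℕ} (B : DetBP (TEVar h k) k Bool) (q : Fin B.size) (I : TEInput h k)
    (n : ℕ) : Fin B.size := (B.step I.evalVar)^[n] q

/-- The state `q` queries the thrifty variable of node `x` of input `I`. -/
def Queries {h k : ℕ} (B : DetBP (TEVar h k) k Bool) (I : TEInput h k) (q : Fin B.size)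
    (x : ℕ) : Prop := ∃ X, B.label q = Sum.inl X ∧ IsThriftyVarOf I x X

/-- The state `q` queries the parent of `x` and names the correct value of the sibling of `x`. -/
def Reveals {h k : ℕ} (B : DetBP (TEVar h k) k Bool) (I : TEInput h k) (q : Fin B.size)
    (x : ℕ) : Prop :=
  ∃ hi a b, B.label q = Sum.inl (TEVar.internal (x / 2) hi a b) ∧
    (x % 2 = 0 → b = I.val (sib x)) ∧ (x % 2 = 1 → a = I.val (sib x))

/-- The possible values of node `x` at state `q` when the sibling of `x` has value `v`. -/
def candidates {h k : ℕ} (B : DetBP (TEVar h k) k Bool) (q : Fin B.size) (x : ℕ) (v : Fin k) :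
    Set (Fin k) :=
  {c | ∃ I : TEInput h k, (∃ t, B.run I.evalVar t = q) ∧ I.val x = c ∧ I.val (sib x) = v}

/-- The state `q` queries an internal node and has more than one element in one of its
thrifty sets. -/
def Exceptional {h k : ℕ} (B : DetBP (TEVar h k) k Bool) (q : Fin B.size) : Prop :=
  ∃ (i : ℕ) (hi : IsInternalNode h i) (a b : Fin k),
    B.label q = Sum.inl (TEVar.internal i hi a b) ∧
    (1 < (RightThrifty B q i b).ncard ∨ 1 < (LeftThrifty B q i a).ncard)

/-- All thrifty sets of `B` have at most `p` elements. -/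
def ThriftyBound {h k : ℕ} (B : DetBP (TEVar h k) k Bool) (p : ℕ) : Prop :=
  ∀ (q : Fin B.size) (i : ℕ) (hi : IsInternalNode h i) (a b : Fin k),
    B.label q = Sum.inl (TEVar.internal i hi a b) →
    (LeftThrifty B q i a).ncard ≤ p ∧ (RightThrifty B q i b).ncard ≤ p

section Program

variable {h k : ℕ} {B : DetBP (TEVar h k) k Bool}

theorem IsThriftyVarOf.node_eq {I : TEInput h k} {x : ℕ} {X : TEVar h k}
    (hX : IsThriftyVarOf I x X) : X.node = x := by
  cases X with
  | internal i hi a b => exact hX.1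
  | leaf i hi => exact hX

theorem Queries.node_unique {I J : TEInput h k} {q : Fin B.size} {x y : ℕ}
    (hx : Queries B I q x) (hy : Queries B J q y) : x = y := by
  obtain ⟨X, hX, hXx⟩ := hx
  obtain ⟨Y, hY, hYy⟩ := hy
  rw [hX] at hY
  cases hY
  exact hXx.node_eq.symm.trans hYy.node_eq

theorem Queries.exists_internal {I : TEInput h k} {q : Fin B.size} {x : ℕ}
    (hx : Queries B I q x) (hlt : x < 2 ^ (h - 1)) :
    ∃ hi, B.label q = Sum.inl (TEVar.internal x hi (I.val (2 * x)) (I.val (2 * x + 1))) := by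
  obtain ⟨X, hX, hXx⟩ := hx
  cases X with
  | internal i hi a b =>
    obtain ⟨rfl, rfl, rfl⟩ := hXx
    exact ⟨hi, hX⟩
  | leaf i hi =>
    obtain rfl : i = x := hXx
    exact absurd hi.1 (not_le.2 hlt)

theorem Queries.congr {I J : TEInput h k} {q : Fin B.size} {x : ℕ} (hx : Queries B I q x)
    (h0 : I.val (2 * x) = J.val (2 * x)) (h1 : I.val (2 * x + 1) = J.val (2 * x + 1)) :
    Queries B J q x := by
  obtain ⟨X, hX, hXx⟩ := hx
  refine ⟨X, hX, ?_⟩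
  cases X with
  | internal i hi a b =>
    obtain ⟨rfl, rfl, rfl⟩ := hXx
    exact ⟨rfl, h0, h1⟩
  | leaf i hi => exact hXx

theorem Reveals.parent_unique {I J : TEInput h k} {q : Fin B.size} {x y : ℕ}
    (hx : Reveals B I q x) (hy : Reveals B J q y) : x / 2 = y / 2 := by
  obtain ⟨hi, a, b, hX, -⟩ := hx
  obtain ⟨hi', a', b', hY, -⟩ := hy
  rw [hX] at hY
  injection hY with hY
  injection hY

theorem Reveals.congr {I J : TEInput h k} {q : Fin B.size} {x : ℕ} (hx : Reveals B I q x)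
    (hs : I.val (sib x) = J.val (sib x)) : Reveals B J q x := by
  obtain ⟨hi, a, b, hX, hb, ha⟩ := hx
  exact ⟨hi, a, b, hX, fun hp => (hb hp).trans hs, fun hp => (ha hp).trans hs⟩

theorem Reveals.lt {I : TEInput h k} {q : Fin B.size} {x : ℕ} (hh : 1 ≤ h)
    (hx : Reveals B I q x) : 2 ≤ x ∧ x < 2 ^ h := by
  obtain ⟨hi, -⟩ := hx
  obtain ⟨n, rfl⟩ := Nat.exists_eq_add_of_le' hh
  have := hi.1
  have := hi.2
  simp only [Nat.add_sub_cancel] at this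
  rw [pow_succ]
  omega

theorem Queries.reveals {I : TEInput h k} {q : Fin B.size} {x : ℕ} (hh : 1 ≤ h)
    (hlt : x < 2 ^ h) (hx : Queries B I q (x / 2)) : Reveals B I q x := by
  obtain ⟨n, rfl⟩ := Nat.exists_eq_add_of_le' hh
  obtain ⟨hi, hX⟩ := hx.exists_internal (by simp only [Nat.add_sub_cancel]; omega)
  refine ⟨hi, _, _, hX, fun hp => ?_, fun hp => ?_⟩
  · congr 1; unfold sib; rw [if_pos hp]; omega
  · congr 1; unfold sib; rw [if_neg (by omega)]; omega

theorem Reveals.candidates_eq {I : TEInput h k} {q : Fin B.size} {x : ℕ}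
    (hx : Reveals B I q x) :
    ∃ (hi : IsInternalNode h (x / 2)) (a b : Fin k),
      B.label q = Sum.inl (TEVar.internal (x / 2) hi a b) ∧
      (candidates B q x (I.val (sib x)) = RightThrifty B q (x / 2) b ∨
        candidates B q x (I.val (sib x)) = LeftThrifty B q (x / 2) a) := by
  obtain ⟨hi, a, b, hX, hb, ha⟩ := hx
  refine ⟨hi, a, b, hX, ?_⟩
  rcases Nat.mod_two_eq_zero_or_one x with hp | hp
  · left
    have h0 : 2 * (x / 2) = x := by omega
    have h1 : 2 * (x / 2) + 1 = sib x := by unfold sib; rw [if_pos hp]; omega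
    rw [hb hp]
    simp only [candidates, RightThrifty, h0, ← h1]
  · right
    have h1 : 2 * (x / 2) = sib x := by unfold sib; rw [if_neg (by omega)]; omega
    have h0 : sib x + 1 = x := by omega
    rw [ha hp]
    ext c
    simp only [candidates, LeftThrifty, h1, h0, Set.mem_ofPred_eq]
    constructor
    · rintro ⟨J, hJ, h2, h3⟩; exact ⟨J, hJ, h3, h2⟩
    · rintro ⟨J, hJ, h2, h3⟩; exact ⟨J, hJ, h3, h2⟩

theorem Reveals.candidates_ncard_le {I : TEInput h k} {q : Fin B.size} {x p : ℕ}
    (hB : ThriftyBound B p) (hx : Reveals B I q x) :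
    (candidates B q x (I.val (sib x))).ncard ≤ p := by
  obtain ⟨hi, a, b, hX, h | h⟩ := hx.candidates_eq <;> rw [h]
  · exact (hB q _ hi a b hX).2
  · exact (hB q _ hi a b hX).1

theorem Reveals.candidates_ncard_le_one {I : TEInput h k} {q : Fin B.size} {x : ℕ}
    (hq : ¬ Exceptional B q) (hx : Reveals B I q x) :
    (candidates B q x (I.val (sib x))).ncard ≤ 1 := by
  obtain ⟨hi, a, b, hX, h⟩ := hx.candidates_eq
  by_contra hlt
  rw [not_le] at hlt
  refine hq ⟨_, hi, a, b, hX, ?_⟩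
  rcases h with h | h <;> rw [h] at hlt
  · exact Or.inl hlt
  · exact Or.inr hlt

theorem pathFrom_succ (q : Fin B.size) (I : TEInput h k) (n : ℕ) :
    pathFrom B q I (n + 1) = B.step I.evalVar (pathFrom B q I n) :=
  Function.iterate_succ_apply' _ _ _

theorem pathFrom_congr {I J : TEInput h k} {q : Fin B.size} {n : ℕ}
    (H : ∀ m < n, ∀ X, B.label (pathFrom B q I m) = Sum.inl X →
      pathFrom B q I m = pathFrom B q J m → I.evalVar X = J.evalVar X) :
    pathFrom B q I n = pathFrom B q J n := by
  induction n with
  | zero => rfl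
  | succ n ih =>
    have ih := ih fun m hm => H m (hm.trans (Nat.lt_succ_self n))
    have H := fun X hX => H n (Nat.lt_succ_self n) X hX ih
    rw [pathFrom_succ, pathFrom_succ, ← ih]
    unfold DetBP.step
    split
    · rename_i X hX; rw [H X hX]
    · rfl

theorem pathFrom_start (I : TEInput h k) (n : ℕ) :
    pathFrom B B.start I n = B.run I.evalVar n := rfl

theorem pathFrom_run (I : TEInput h k) (t n : ℕ) :
    pathFrom B (B.run I.evalVar t) I n = B.run I.evalVar (t + n) := by
  rw [pathFrom, DetBP.run, ← Function.iterate_add_apply, Nat.add_comm]; rfl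

theorem run_setThrifty {I : TEInput h k} {x t : ℕ} (v : Fin k)
    (hx : ∀ t' < t, ¬ Queries B I (B.run I.evalVar t') x) :
    B.run I.evalVar t = B.run (I.setThrifty x v).evalVar t := by
  refine pathFrom_congr (q := B.start) fun m hm X hX _ => ?_
  exact (I.setThrifty_evalVar v fun hX' => hx m hm ⟨X, hX, hX'⟩).symm

theorem exists_queries_root (hk : 2 ≤ k) (hB : B.SolvesBT) (I : TEInput h k) :
    ∃ t, Queries B I (B.run I.evalVar t) 1 := by
  by_contra! hno
  have key : ∀ v : Fin k, decide ((v : ℕ) = 0) = decide (((I.val 1 : Fin k) : ℕ) = 0) := by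
    intro v
    obtain ⟨t, ht⟩ := hB (I.setThrifty 1 v)
    obtain ⟨s, hs⟩ := hB I
    have fix : ∀ (J : TEInput h k) t b, B.label (B.run J.evalVar t) = Sum.inr b →
        ∀ n, B.run J.evalVar (t + n) = B.run J.evalVar t := by
      intro J t b hb n
      induction n with
      | zero => rfl
      | succ n ih =>
        rw [← add_assoc, ← pathFrom_start, pathFrom_succ, pathFrom_start, ih, DetBP.step, hb]
    have e1 := fix _ _ _ ht s
    have e2 := fix _ _ _ hs t
    rw [Nat.add_comm s t, run_setThrifty v fun t' _ => hno t', e1] at e2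
    rw [← e2, ht, I.setThrifty_val le_rfl] at hs
    exact Sum.inr.inj hs
  have h0 := key ⟨0, by omega⟩
  have h1 := key ⟨1, by omega⟩
  rw [← h0] at h1
  simp at h1

theorem exists_queries_child {p : ℕ} (hpk : p < k) (hB : ThriftyBound B p) (hh : 1 ≤ h)
    {I : TEInput h k} {t c : ℕ} (hc : c < 2 ^ h)
    (ht : Queries B I (B.run I.evalVar t) (c / 2)) :
    ∃ t' < t, Queries B I (B.run I.evalVar t') c := by
  by_contra! hno
  have hr := ht.reveals hh hc
  have hc1 := (hr.lt hh).1
  have hle := hr.candidates_ncard_le hB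
  have hsib : ¬ Desc (sib c) c := by
    intro hd
    rcases hd.eq_or_of_half with h1 | ⟨d, h1⟩
    · exact sib_ne c h1
    · have h2 : sib c ≤ c / 2 := h1 ▸ Nat.div_le_self _ _
      have := sib_div_two c
      omega
  have huniv : candidates B (B.run I.evalVar t) c (I.val (sib c)) = Set.univ := by
    ext v
    simp only [Set.mem_univ, iff_true]
    exact ⟨I.setThrifty c v, ⟨t, (run_setThrifty v hno).symm⟩, I.setThrifty_val (by omega) v,
      I.setThrifty_val_of_not_desc v hsib⟩
  rw [huniv, Set.ncard_univ, Nat.card_eq_fintype_card, Fintype.card_fin] at hle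
  omega

end Program

/-! ### The bottleneck state of an input -/

/-- Node `x` holds a pebble at time `t`: the thrifty variable of its parent is queried at some
time `≥ t` before the thrifty variable of `x` is. The root is pebbled once its thrifty variable
has been queried. -/
def Pebbled {h k : ℕ} (B : DetBP (TEVar h k) k Bool) (I : TEInput h k) (x t : ℕ) : Prop :=
  (x = 1 ∧ ∃ t' < t, Queries B I (B.run I.evalVar t') 1) ∨
  (x ≠ 1 ∧ ∃ t' ≥ t, Queries B I (B.run I.evalVar t') (x / 2) ∧
    ∀ s, t ≤ s → s < t' → ¬ Queries B I (B.run I.evalVar s) x)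

/-- Input `I` passes through the state `q`, which makes a thrifty query to the node `u` of
height two, at a moment when no ancestor of `u` is pebbled, and when for every sibling of an
ancestor-or-self of `u` the leftmost path below that sibling is pebbled. -/
structure Bottleneck {h k : ℕ} (B : DetBP (TEVar h k) k Bool) (I : TEInput h k)
    (q : Fin B.size) (u : ℕ) : Prop where
  visits : ∃ t, B.run I.evalVar t = q
  le : 2 ^ (h - 2) ≤ u
  lt : u < 2 ^ (h - 1)
  start : Queries B I q u
  spine : ∀ e < h - 2, ∀ n, Queries B I (pathFrom B q I n) (u / 2 ^ (e + 1)) →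
    ∃ n' < n, Queries B I (pathFrom B q I n') (u / 2 ^ e)
  blocked : ∀ e < h - 2, ∃ m n, br u e m < 2 ^ h ∧
    Queries B I (pathFrom B q I n) (br u e m / 2) ∧
    ∀ n' < n, ¬ Queries B I (pathFrom B q I n') (br u e m)

section Pebbling

variable {h k : ℕ} {B : DetBP (TEVar h k) k Bool} {I : TEInput h k}

theorem Pebbled.queries_of_not {x t : ℕ} (h1 : Pebbled B I x (t + 1)) (h0 : ¬ Pebbled B I x t) :
    Queries B I (B.run I.evalVar t) x := by
  by_contra hq
  apply h0
  rcases h1 with ⟨rfl, t', ht', hT⟩ | ⟨hx, t', ht', hT, hno⟩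
  · refine Or.inl ⟨rfl, t', ?_, hT⟩
    rcases Nat.lt_succ_iff_lt_or_eq.1 ht' with h | rfl
    · exact h
    · exact absurd hT hq
  · refine Or.inr ⟨hx, t', by omega, hT, fun s hs hs' => ?_⟩
    rcases Nat.eq_or_lt_of_le hs with rfl | h
    · exact hq
    · exact hno s h hs'

theorem not_pebbled_zero {p : ℕ} (hpk : p < k) (hB : ThriftyBound B p) (hh : 1 ≤ h) {x : ℕ}
    (hx : x < 2 ^ h) : ¬ Pebbled B I x 0 := by
  rintro (⟨-, t', ht', -⟩ | ⟨-, t', -, hT, hno⟩)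
  · exact absurd ht' (Nat.not_lt_zero _)
  · obtain ⟨s, hs, hS⟩ := exists_queries_child hpk hB hh hx hT
    exact hno s (Nat.zero_le _) hs hS

theorem level_of_br {u e : ℕ} (he : e < h - 2) (hl : 2 ^ (h - 2) ≤ u) (hu : u < 2 ^ (h - 1)) :
    2 ^ (h - 2) ≤ br u e e ∧ br u e e < 2 ^ (h - 1) := by
  obtain ⟨d, hd⟩ := Nat.exists_eq_add_of_lt he
  have hd1 : h - 1 = d + 2 + e := by omega
  have hd2 : h - 2 = d + 1 + e := by omega
  rw [hd2] at hl ⊢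
  rw [hd1] at hu ⊢
  have hp : 0 < 2 ^ e := by positivity
  have h1 : 2 ^ (d + 1) ≤ u / 2 ^ e := by rwa [Nat.le_div_iff_mul_le hp, ← pow_add]
  have h2 : u / 2 ^ e < 2 ^ (d + 2) := by rwa [Nat.div_lt_iff_lt_mul hp, ← pow_add]
  have h3 : 2 ^ (d + 1) ≤ sib (u / 2 ^ e) ∧ sib (u / 2 ^ e) < 2 ^ (d + 2) := by
    have := sib_div_two (u / 2 ^ e)
    rw [pow_succ] at h1 h2 ⊢
    rw [pow_succ] at h2 ⊢
    rw [pow_succ]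
    omega
  unfold br
  rw [pow_add _ _ e, pow_add _ _ e]
  exact ⟨Nat.mul_le_mul_right _ h3.1, Nat.mul_lt_mul_of_pos_right h3.2 hp⟩

theorem exists_bottleneck {p : ℕ} (hk : 2 ≤ k) (hpk : p < k) (hh : 3 ≤ h)
    (hB : B.SolvesBT) (hp : ThriftyBound B p) (I : TEInput h k) :
    ∃ q u, Bottleneck B I q u := by
  classical
  have hpow : 2 ^ (h - 1) ≤ 2 ^ h := Nat.pow_le_pow_right (by norm_num) (by omega)
  have hpow' : 2 ^ (h - 1) = 2 * 2 ^ (h - 2) := by rw [← pow_succ']; congr 1; omega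
  let Cut : ℕ → Prop := fun t =>
    ∀ v, 2 ^ (h - 2) ≤ v → v < 2 ^ (h - 1) → ∃ e ≤ h - 2, Pebbled B I (v / 2 ^ e) t
  obtain ⟨t1, ht1⟩ := exists_queries_root hk hB I
  have hroot : ∀ v, 2 ^ (h - 2) ≤ v → v < 2 ^ (h - 1) → v / 2 ^ (h - 2) = 1 := by
    intro v h1 h2
    apply Nat.div_eq_of_lt_le <;> omega
  have hex : ∃ t, Cut t := ⟨t1 + 1, fun v h1 h2 =>
    ⟨h - 2, le_rfl, Or.inl ⟨hroot v h1 h2, t1, Nat.lt_succ_self _, hroot v h1 h2 ▸ ht1⟩⟩⟩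
  have hcut := Nat.find_spec hex
  have hmin := fun s => Nat.find_min hex (m := s)
  generalize Nat.find hex = τ at hcut hmin
  cases τ with
  | zero =>
    obtain ⟨e, -, he⟩ := hcut (2 ^ (h - 2)) le_rfl (by have := Nat.two_pow_pos (h - 2); omega)
    refine absurd he (not_pebbled_zero hpk hp (by omega) ?_)
    exact (Nat.div_le_self _ _).trans_lt (Nat.pow_lt_pow_right (by norm_num) (by omega))
  | succ t =>
    have hnot := hmin t (Nat.lt_succ_self t)
    simp only [Cut, not_forall, not_exists, not_and] at hnot
    obtain ⟨u, hul, hult, hnp⟩ := hnot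
    have hne1 : ∀ e < h - 2, u / 2 ^ e ≠ 1 := by
      intro e he h1
      have h2 : u / 2 ^ (e + 1) = 0 := by rw [← half_pow, h1]
      exact (Nat.div_pos ((Nat.pow_le_pow_right (by norm_num) he).trans hul)
        (by positivity)).ne' h2
    have hTu : Queries B I (B.run I.evalVar t) u := by
      obtain ⟨e, he, hpe⟩ := hcut u hul hult
      have hT := hpe.queries_of_not (hnp e he)
      cases e with
      | zero => simpa using hT
      | succ e =>
        refine absurd ?_ (hnp e (by omega))
        refine Or.inr ⟨?_, t, le_rfl, by rwa [half_pow], fun s hs hs' => by omega⟩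
        intro h1
        exact hne1 e (by omega) h1
    refine ⟨B.run I.evalVar t, u, ⟨t, rfl⟩, hul, hult, hTu, ?_, ?_⟩
    · intro e he n hn
      rw [pathFrom_run] at hn
      have := hnp e (by omega)
      simp only [Pebbled, not_or, not_and, not_exists, not_forall] at this
      obtain ⟨s, hs, hs', hS⟩ := this.2 (hne1 e he) (t + n) (by omega) (by rwa [half_pow])
      refine ⟨s - t, by omega, ?_⟩
      rw [pathFrom_run, Nat.add_sub_cancel' hs]
      exact not_not.1 hS
    · intro e he
      have hlev := level_of_br he hul hult
      obtain ⟨d, hd, hpd⟩ := hcut _ hlev.1 hlev.2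
      have hde : d ≤ e := by
        by_contra hlt
        rw [not_le] at hlt
        rw [br_div_of_lt hlt, show e + (d - e) = d by omega] at hpd
        have h1 := (hpd.queries_of_not (hnp d hd)).node_unique hTu
        have h2 : u / 2 ^ d < u := Nat.div_lt_self (by have := Nat.two_pow_pos (h - 2); omega)
          (Nat.one_lt_two_pow (by omega))
        omega
      have hupos : 0 < u / 2 ^ (e + 1) := Nat.div_pos
        ((Nat.pow_le_pow_right (by norm_num) (by omega)).trans hul) (by positivity)
      have hlt : br u e (e - d) < 2 ^ h := by
        rw [← br_div_of_le hde]
        exact (Nat.div_le_self _ _).trans_lt (hlev.2.trans_le hpow)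
      rw [br_div_of_le hde] at hpd
      refine ⟨e - d, ?_⟩
      rcases hpd with ⟨h1, -⟩ | ⟨-, t', ht', hT, hno⟩
      · exact absurd (h1.trans (hroot u hul hult).symm) (br_ne_spine hupos)
      · refine ⟨t' - t, hlt, by rwa [pathFrom_run, Nat.add_sub_cancel' (by omega)], ?_⟩
        intro n' hn' hq
        rw [pathFrom_run] at hq
        cases n' with
        | zero =>
          have h1 := hTu.node_unique hq
          refine br_ne_spine (m := e - d) (d := 0) hupos ?_
          simpa using h1.symm
        | succ n' => exact hno (t + (n' + 1)) (by omega) (by omega) hq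

end Pebbling

/-! ### Learning a pebbled node on each leftmost path -/

/-- After `n` steps from `q`, the computation of `I` queries the parent of the node `br u e m`
with the correct value of its sibling, while the thrifty variable of `br u e m` has not been
queried since `q`. -/
structure Learns {h k : ℕ} (B : DetBP (TEVar h k) k Bool) (I : TEInput h k) (q : Fin B.size)
    (u e m n : ℕ) : Prop where
  reveals : Reveals B I (pathFrom B q I n) (br u e m)
  fresh : ∀ n' < n, ¬ Queries B I (pathFrom B q I n') (br u e m)
  top : m = 0 → ∃ n' < n, Queries B I (pathFrom B q I n') (u / 2 ^ e)

section Learning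

variable {h k : ℕ} {B : DetBP (TEVar h k) k Bool} {I : TEInput h k} {q : Fin B.size} {u : ℕ}

theorem Bottleneck.pos (hI : Bottleneck B I q u) {e : ℕ} (he : e < h - 2) :
    0 < u / 2 ^ (e + 1) :=
  Nat.div_pos ((Nat.pow_le_pow_right (by norm_num) (by omega)).trans hI.le) (by positivity)

theorem Bottleneck.learns_of_queries (hI : Bottleneck B I q u) {e m n : ℕ}
    (he : e < h - 2) (hm : br u e m < 2 ^ h)
    (hq : Queries B I (pathFrom B q I n) (br u e m / 2))
    (hno : ∀ n' < n, ¬ Queries B I (pathFrom B q I n') (br u e m)) : Learns B I q u e m n where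
  reveals := hq.reveals (by omega) hm
  fresh := hno
  top := by
    rintro rfl
    rw [br_zero_half] at hq
    exact hI.spine e he n hq

theorem Bottleneck.exists_learns (hI : Bottleneck B I q u) {e : ℕ} (he : e < h - 2) :
    ∃ n m, Learns B I q u e m n := by
  obtain ⟨m, n, hm, hq, hno⟩ := hI.blocked e he
  exact ⟨n, m, hI.learns_of_queries he hm hq hno⟩

theorem Bottleneck.queries_below (hI : Bottleneck B I q u) {e m n N : ℕ} (he : e < h - 2)
    (hno : ∀ m' n', n' < N → ¬ Learns B I q u e m' n') (hn : n < N)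
    (hq : Queries B I (pathFrom B q I n) (br u e m)) (d : ℕ) (hd : br u e (m + d) < 2 ^ h) :
    ∃ n' < N, Queries B I (pathFrom B q I n') (br u e (m + d)) := by
  induction d with
  | zero => exact ⟨n, hn, hq⟩
  | succ d ih =>
    obtain ⟨n1, hn1, hq1⟩ := ih (by rw [← add_assoc, br_succ] at hd; omega)
    by_contra! hc
    refine hno (m + (d + 1)) n1 hn1 (hI.learns_of_queries he hd ?_ fun n' hn' => hc n' (by omega))
    rwa [← add_assoc, br_succ_half]

theorem Bottleneck.learns_of_spine (hI : Bottleneck B I q u) {e n : ℕ} (he : e < h - 2)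
    (hq : Queries B I (pathFrom B q I n) (u / 2 ^ (e + 1))) :
    ∃ n' ≤ n, ∃ m, Learns B I q u e m n' := by
  by_contra! hno
  obtain ⟨m, n4, hm, hq4, hno4⟩ := hI.blocked e he
  have hL := hI.learns_of_queries he hm hq4 hno4
  have h0 : br u e 0 < 2 ^ h := by
    refine lt_of_le_of_lt ?_ hm
    simp only [br, pow_zero, mul_one]
    exact Nat.le_mul_of_pos_right _ (by positivity)
  have htop : ∃ n1 < n + 1, Queries B I (pathFrom B q I n1) (br u e 0) := by
    by_contra! hc
    refine hno n le_rfl 0 (hI.learns_of_queries he h0 (by rwa [br_zero_half]) fun n' hn' =>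
      hc n' (by omega))
  obtain ⟨n1, hn1, hq1⟩ := htop
  obtain ⟨n2, hn2, hq2⟩ := hI.queries_below he (N := n + 1)
    (fun m' n' hn' => hno n' (by omega) m') hn1 hq1 m (by simpa using hm)
  rw [Nat.zero_add] at hq2
  by_cases h4 : n4 ≤ n
  · exact hno n4 h4 m hL
  · exact hno4 n2 (by omega) hq2

theorem Bottleneck.learns_below_spine (hI : Bottleneck B I q u) (j : ℕ) :
    ∀ n, j ≤ h - 2 → Queries B I (pathFrom B q I n) (u / 2 ^ j) →
    ∀ e < j, ∃ n' ≤ n, ∃ m, Learns B I q u e m n' := by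
  induction j with
  | zero => exact fun _ _ _ e he => absurd he (Nat.not_lt_zero _)
  | succ j ih =>
    intro n hj hq e he
    rcases Nat.lt_succ_iff_lt_or_eq.1 he with h1 | rfl
    · obtain ⟨n1, hn1, hq1⟩ := hI.spine j (by omega) n hq
      obtain ⟨n', hn', h2⟩ := ih n1 (by omega) hq1 e h1
      exact ⟨n', by omega, h2⟩
    · exact hI.learns_of_spine (by omega) hq

/-- A choice, for every branch off the path to `u`, of the first learning event: its time
`nn e` and the depth `mm e` of the learned node. -/
def FirstLearns (B : DetBP (TEVar h k) k Bool) (I : TEInput h k) (q : Fin B.size) (u : ℕ)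
    (mm nn : ℕ → ℕ) : Prop :=
  ∀ e < h - 2, Learns B I q u e (mm e) (nn e) ∧ ∀ m n, Learns B I q u e m n → nn e ≤ n

theorem Bottleneck.exists_firstLearns (hI : Bottleneck B I q u) :
    ∃ mm nn, FirstLearns B I q u mm nn := by
  classical
  have : ∀ e, ∃ m n, e < h - 2 →
      Learns B I q u e m n ∧ ∀ m' n', Learns B I q u e m' n' → n ≤ n' := by
    intro e
    by_cases he : e < h - 2
    · have hex := hI.exists_learns he
      obtain ⟨m, hm⟩ := Nat.find_spec hex
      exact ⟨m, Nat.find hex, fun _ => ⟨hm, fun m' n' h' => Nat.find_min' hex ⟨m', h'⟩⟩⟩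
    · exact ⟨0, 0, fun h' => absurd h' he⟩
  choose mm nn hmn using this
  exact ⟨mm, nn, hmn⟩

end Learning

/-! ### Saved nodes and decoding -/

/-- The nodes whose thrifty variables are recovered from the computation: the children of `u`
and one node on every branch off the path from `u` to the root. -/
def saved (h u : ℕ) (mm : ℕ → ℕ) : Finset ℕ :=
  {2 * u, 2 * u + 1} ∪ (Finset.range (h - 2)).image fun e => br u e (mm e)

theorem mem_saved {h u i : ℕ} {mm : ℕ → ℕ} :
    i ∈ saved h u mm ↔ i / 2 = u ∨ ∃ e < h - 2, br u e (mm e) = i := by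
  simp only [saved, Finset.mem_union, Finset.mem_insert, Finset.mem_singleton, Finset.mem_image,
    Finset.mem_range]
  constructor
  · rintro (h | h)
    · left; omega
    · exact Or.inr h
  · rintro (h | h)
    · left; omega
    · exact Or.inr h

section Antichain

variable {h u : ℕ} {mm : ℕ → ℕ}

theorem pos_of_half_pos {u e : ℕ} (hu : 0 < u / 2 ^ (e + 1)) : 0 < u :=
  Nat.pos_of_ne_zero fun h0 => by simp [h0] at hu

theorem br_half_ne {e m : ℕ} (hu : 0 < u / 2 ^ (e + 1)) : br u e m / 2 ≠ u := by
  intro h1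
  cases m with
  | zero =>
    rw [br_zero_half] at h1
    have h2 : u / 2 ^ (e + 1) = u / 2 ^ 0 := by simpa using h1
    have := div_pow_inj hu h2
    omega
  | succ m =>
    rw [br_succ_half] at h1
    exact br_ne_spine (m := m) (d := 0) hu (by simpa using h1)

theorem not_spine_of_mem_saved (hu0 : 0 < u) (hu : ∀ e < h - 2, 0 < u / 2 ^ (e + 1)) {s d : ℕ}
    (hs : s ∈ saved h u mm) : s ≠ u / 2 ^ d := by
  intro h1
  rcases mem_saved.1 hs with h2 | ⟨e, he, rfl⟩
  · have := Nat.div_le_self u (2 ^ d)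
    omega
  · exact br_ne_spine (hu e he) h1

theorem not_desc_of_half_mem_saved (hu0 : 0 < u) (hu : ∀ e < h - 2, 0 < u / 2 ^ (e + 1))
    {y s s' : ℕ} (hy : y / 2 = s) (hs : s ∈ saved h u mm) (hs' : s' ∈ saved h u mm) :
    ¬ Desc y s' := by
  intro hd
  rcases mem_saved.1 hs' with h1 | ⟨e, he, rfl⟩
  · rcases hd.eq_or_of_half with h2 | ⟨d, h2⟩
    · exact not_spine_of_mem_saved (d := 0) hu0 hu hs (by rw [← hy, h2, h1]; simp)
    · exact not_spine_of_mem_saved (d := d + 1) hu0 hu hs (by rw [← hy, h2, h1, half_pow])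
  · rcases hd.of_br with ⟨m, hm, rfl⟩ | ⟨c, -, rfl⟩
    · cases m with
      | zero =>
        exact not_spine_of_mem_saved (d := e + 1) hu0 hu hs (by rw [← hy, br_zero_half])
      | succ m =>
        rw [br_succ_half] at hy
        rcases mem_saved.1 hs with h1 | ⟨e', he', h1⟩
        · rw [← hy] at h1
          exact br_half_ne (hu e he) h1
        · rw [← hy] at h1
          obtain ⟨rfl, h2⟩ := br_inj (hu e' he') (hu e he) h1
          omega
    · exact not_spine_of_mem_saved hu0 hu hs (by rw [← hy, half_pow])

theorem not_desc_sib_br (hu : ∀ e < h - 2, 0 < u / 2 ^ (e + 1)) {e m s : ℕ} (he : e < h - 2)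
    (hs : s ∈ saved h u mm) : ¬ Desc (sib (br u e (m + 1))) s := by
  have hhalf : sib (br u e (m + 1)) / 2 = br u e m := by rw [sib_div_two, br_succ_half]
  intro hd
  rcases mem_saved.1 hs with h1 | ⟨e', he', rfl⟩
  · rcases hd.eq_or_of_half with h2 | ⟨d, h2⟩
    · rw [h2, h1] at hhalf
      exact br_ne_spine (d := 0) (hu e he) (by rw [← hhalf]; simp)
    · rw [h2, h1, half_pow] at hhalf
      exact br_ne_spine (hu e he) hhalf.symm
  · rcases hd.of_br with ⟨m', hm', h2⟩ | ⟨c, -, h2⟩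
    · rw [h2] at hhalf
      cases m' with
      | zero =>
        rw [br_zero_half] at hhalf
        exact br_ne_spine (hu e he) hhalf.symm
      | succ m' =>
        rw [br_succ_half] at hhalf
        obtain ⟨rfl, rfl⟩ := br_inj (hu e' he') (hu e he) hhalf
        exact sib_ne _ h2
    · rw [h2, half_pow] at hhalf
      exact br_ne_spine (hu e he) hhalf.symm

theorem not_desc_br_of_lt (hu : ∀ e < h - 2, 0 < u / 2 ^ (e + 1)) {e m s : ℕ} (he : e < h - 2)
    (hm : mm e < m) (hs : s ∈ saved h u mm) : ¬ Desc (br u e m) s := by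
  intro hd
  rcases mem_saved.1 hs with h1 | ⟨e', he', rfl⟩
  · rcases hd.eq_or_of_half with h2 | ⟨d, h2⟩
    · exact br_half_ne (hu e he) (by rw [h2, h1])
    · rw [h1] at h2
      exact br_ne_spine (hu e he) h2
  · rcases hd.of_br with ⟨m', hm', h2⟩ | ⟨c, -, h2⟩
    · obtain ⟨rfl, rfl⟩ := br_inj (hu e he) (hu e' he') h2
      omega
    · exact br_ne_spine (hu e he) h2

theorem lt_of_desc_spine_br (hu : ∀ e < h - 2, 0 < u / 2 ^ (e + 1)) {e m j : ℕ}
    (he : e < h - 2) (hj : j ≤ h - 2) (hd : Desc (u / 2 ^ j) (br u e m)) : e < j := by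
  rcases hd.of_br with ⟨m', -, h2⟩ | ⟨c, hc, h2⟩
  · exact absurd h2.symm (br_ne_spine (hu e he))
  · have hpos : 0 < u / 2 ^ j := by
      cases j with
      | zero => simpa using pos_of_half_pos (hu e he)
      | succ j => exact hu j (by omega)
    have := div_pow_inj hpos h2
    omega

theorem card_saved (hh : 2 ≤ h) (hu : ∀ e < h - 2, 0 < u / 2 ^ (e + 1)) :
    (saved h u mm).card = h := by
  rw [saved, Finset.card_union_of_disjoint, Finset.card_pair (by omega),
    Finset.card_image_of_injOn, Finset.card_range]
  · omega
  · intro e he e' he' hee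
    simp only [Finset.coe_range, Set.mem_Iio] at he he'
    exact (br_inj (hu e he) (hu e' he') hee).1
  · rw [Finset.disjoint_left]
    intro i hi hi'
    simp only [Finset.mem_image, Finset.mem_range] at hi'
    obtain ⟨e, he, rfl⟩ := hi'
    simp only [Finset.mem_insert, Finset.mem_singleton] at hi
    exact br_half_ne (m := mm e) (hu e he) (by omega)

end Antichain

/-- `J` differs from `I` at most on the thrifty variables of `I` at the nodes in `S`. -/
def DiffersOn {h k : ℕ} (S : Finset ℕ) (I J : TEInput h k) : Prop :=
  ∀ i a b, J.f i a b ≠ I.f i a b → i ∈ S ∧ a = I.val (2 * i) ∧ b = I.val (2 * i + 1)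

/-- `I` is a regular input with bottleneck state `q` and learning data `mm`, `nn`, which differs
from `J` only on the thrifty variables of its saved nodes. -/
structure Decodes {h k : ℕ} [NeZero k] (B : DetBP (TEVar h k) k Bool) (q : Fin B.size) (u : ℕ)
    (J I : TEInput h k) (mm nn : ℕ → ℕ) : Prop where
  regular : I.Regular
  bottleneck : Bottleneck B I q u
  first : FirstLearns B I q u mm nn
  differs : DiffersOn (saved h u mm) I J

/-- On the branches in `D`, the two inputs have the same learned node with the same value. -/
def AgreeOn {h k : ℕ} (u : ℕ) (D : Finset ℕ) (I I' : TEInput h k) (mm mm' : ℕ → ℕ) : Prop :=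
  ∀ e < h - 2, e ∈ D → mm e = mm' e ∧ I.val (br u e (mm e)) = I'.val (br u e (mm e))

section Decoding

variable {h k : ℕ} {B : DetBP (TEVar h k) k Bool} {q : Fin B.size} {u : ℕ}
  {I I' J : TEInput h k} {mm nn mm' nn' : ℕ → ℕ} {D : Finset ℕ}

theorem AgreeOn.symm (hA : AgreeOn u D I I' mm mm') : AgreeOn u D I' I mm' mm := fun e he heD => by
  obtain ⟨h1, h2⟩ := hA e he heD
  exact ⟨h1.symm, h1 ▸ h2.symm⟩

theorem Bottleneck.u_pos (hI : Bottleneck B I q u) : 0 < u :=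
  (Nat.two_pow_pos _).trans_le hI.le

theorem Bottleneck.val_children (hI : Bottleneck B I q u) (hI' : Bottleneck B I' q u) {i : ℕ}
    (hi : i / 2 = u) : I.val i = I'.val i := by
  obtain ⟨_, h1⟩ := hI.start.exists_internal hI.lt
  obtain ⟨_, h2⟩ := hI'.start.exists_internal hI'.lt
  rw [h1] at h2
  injection h2 with h2
  injection h2 with _ h3 h4
  rcases Nat.mod_two_eq_zero_or_one i with hp | hp
  · rwa [show 2 * u = i by omega] at h3
  · rwa [show 2 * u + 1 = i by omega] at h4

theorem Learns.depth_unique (hu : 0 < u / 2 ^ ((e : ℕ) + 1)) {m m' n : ℕ}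
    (h1 : Reveals B I (pathFrom B q I n) (br u e m))
    (h2 : Reveals B I' (pathFrom B q I n) (br u e m')) : m = m' := by
  have h3 := h1.parent_unique h2
  cases m <;> cases m'
  · rfl
  · rw [br_zero_half, br_succ_half] at h3
    exact absurd h3.symm (br_ne_spine hu)
  · rw [br_zero_half, br_succ_half] at h3
    exact absurd h3 (br_ne_spine hu)
  · rw [br_succ_half, br_succ_half] at h3
    rw [(br_inj hu hu h3).2]

variable [NeZero k]

theorem Decodes.val_eq (hI : Decodes B q u J I mm nn) (hJ : J.Regular) {y : ℕ}
    (hy : ∀ s ∈ saved h u mm, ¬ Desc y s) : I.val y = J.val y := by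
  refine hI.regular.val_congr hJ fun i hi => ?_
  funext a b
  by_contra hne
  exact hy i (hI.differs i a b (Ne.symm hne)).1 hi

theorem Decodes.val_child (hI : Decodes B q u J I mm nn) (hJ : J.Regular) {y : ℕ}
    (hy : y / 2 ∈ saved h u mm) : I.val y = J.val y :=
  hI.val_eq hJ fun _ hs => not_desc_of_half_mem_saved hI.bottleneck.u_pos
    (fun _ he => hI.bottleneck.pos he) rfl hy hs

theorem Decodes.eq_or_not_mem (hI : Decodes B q u J I mm nn) (hI' : Decodes B q u J I' mm' nn')
    (hJ : J.Regular) (hA : AgreeOn u D I I' mm mm') {i : ℕ} (hi : i ∈ saved h u mm) :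
    I.f i (I.val (2 * i)) (I.val (2 * i + 1)) = I'.f i (I.val (2 * i)) (I.val (2 * i + 1)) ∨
      ∃ e < h - 2, e ∉ D ∧ i = br u e (mm e) := by
  by_cases hex : ∃ e < h - 2, e ∉ D ∧ i = br u e (mm e)
  · exact Or.inr hex
  left
  have hboth : i ∈ saved h u mm' ∧ I.val i = I'.val i := by
    rcases mem_saved.1 hi with h1 | ⟨e, he, rfl⟩
    · exact ⟨mem_saved.2 (Or.inl h1), hI.bottleneck.val_children hI'.bottleneck h1⟩
    · by_cases heD : e ∈ D
      · obtain ⟨h1, h2⟩ := hA e he heD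
        exact ⟨mem_saved.2 (Or.inr ⟨e, he, by rw [h1]⟩), h2⟩
      · exact absurd ⟨e, he, heD, rfl⟩ hex
  have hi1 : 1 ≤ i := by
    by_contra h0
    obtain rfl : i = 0 := by omega
    exact not_spine_of_mem_saved hI.bottleneck.u_pos (fun _ he => hI.bottleneck.pos he) hi
      (Nat.div_eq_of_lt (Nat.lt_two_pow_self (n := u))).symm
  have e0 : I.val (2 * i) = I'.val (2 * i) := by
    rw [hI.val_child hJ, hI'.val_child hJ] <;> rw [show 2 * i / 2 = i by omega]
    exacts [hboth.1, hi]
  have e1 : I.val (2 * i + 1) = I'.val (2 * i + 1) := by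
    rw [hI.val_child hJ, hI'.val_child hJ] <;> rw [show (2 * i + 1) / 2 = i by omega]
    exacts [hboth.1, hi]
  rw [← hI.regular.val_eq hi1, e0, e1, ← hI'.regular.val_eq hi1, hboth.2]

theorem Decodes.differ (hI : Decodes B q u J I mm nn) (hI' : Decodes B q u J I' mm' nn')
    (hJ : J.Regular) (hA : AgreeOn u D I I' mm mm') {i : ℕ} {a b : Fin k}
    (hne : I.f i a b ≠ I'.f i a b) :
    (∃ e < h - 2, e ∉ D ∧ i = br u e (mm e) ∧ a = I.val (2 * i) ∧ b = I.val (2 * i + 1)) ∨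
    (∃ e < h - 2, e ∉ D ∧ i = br u e (mm' e) ∧ a = I'.val (2 * i) ∧ b = I'.val (2 * i + 1)) := by
  by_cases h1 : J.f i a b = I.f i a b
  · right
    obtain ⟨hi, rfl, rfl⟩ := hI'.differs i a b (by rw [h1]; exact hne)
    rcases hI'.eq_or_not_mem hI hJ hA.symm hi with h2 | ⟨e, he, heD, rfl⟩
    · exact absurd h2.symm hne
    · exact ⟨e, he, heD, rfl, rfl, rfl⟩
  · left
    obtain ⟨hi, rfl, rfl⟩ := hI.differs i a b h1
    rcases hI.eq_or_not_mem hI' hJ hA hi with h2 | ⟨e, he, heD, rfl⟩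
    · exact absurd h2 hne
    · exact ⟨e, he, heD, rfl, rfl, rfl⟩

theorem Decodes.path_eq (hI : Decodes B q u J I mm nn) (hI' : Decodes B q u J I' mm' nn')
    (hJ : J.Regular) (hA : AgreeOn u D I I' mm mm') {n : ℕ}
    (hn : ∀ e < h - 2, e ∉ D → n ≤ nn e ∧ n ≤ nn' e) :
    pathFrom B q I n = pathFrom B q I' n := by
  refine pathFrom_congr fun m hm X hX hpath => ?_
  by_contra hne
  have key : ∃ i a b, I.f i a b ≠ I'.f i a b ∧
      (∀ K : TEInput h k, a = K.val (2 * i) → b = K.val (2 * i + 1) → IsThriftyVarOf K i X) := by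
    cases X with
    | internal i hi a b => exact ⟨i, a, b, hne, fun K ha hb => ⟨rfl, ha, hb⟩⟩
    | leaf i hi =>
      refine ⟨i, 0, 0, ?_, fun K _ _ => rfl⟩
      rw [← hI.regular.leaf_eq, ← hI'.regular.leaf_eq]
      exact hne
  obtain ⟨i, a, b, hf, hK⟩ := key
  rcases hI.differ hI' hJ hA hf with ⟨e, he, heD, rfl, ha, hb⟩ | ⟨e, he, heD, rfl, ha, hb⟩
  · exact (hI.first e he).1.fresh m (hm.trans_le (hn e he heD).1) ⟨X, hX, hK I ha hb⟩
  · exact (hI'.first e he).1.fresh m (hm.trans_le (hn e he heD).2)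
      ⟨X, hpath ▸ hX, hK I' ha hb⟩

theorem Decodes.spine_agree (hI : Decodes B q u J I mm nn) (hI' : Decodes B q u J I' mm' nn')
    (hJ : J.Regular) (hA : AgreeOn u D I I' mm mm') {j : ℕ} (hj : j ≤ h - 2)
    (hD : ∀ e < j, e ∈ D) {y : ℕ} (hy : Desc (u / 2 ^ j) y) : I.val y = I'.val y := by
  have hpos := fun e (he : e < h - 2) => hI.bottleneck.pos he
  refine hI.regular.val_congr hI'.regular fun i hi => ?_
  have hi' : Desc (u / 2 ^ j) i := by
    obtain ⟨d, rfl⟩ := hi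
    obtain ⟨c, hc⟩ := hy
    exact ⟨d + c, by rw [pow_add, ← Nat.div_div_eq_div_mul, hc]⟩
  funext a b
  by_contra hne
  rcases hI.differ hI' hJ hA hne with ⟨e, he, heD, rfl, -⟩ | ⟨e, he, heD, rfl, -⟩
  all_goals exact heD (hD e (lt_of_desc_spine_br hpos he hj hi'))

theorem Decodes.transfer (hI : Decodes B q u J I mm nn) (hI' : Decodes B q u J I' mm' nn')
    (hJ : J.Regular) (hA : AgreeOn u D I I' mm mm') {j : ℕ} (hj : j < h - 2)
    (hn : ∀ e < h - 2, e ∉ D → nn j ≤ nn e ∧ nn j ≤ nn' e) (hjD : j ∉ D) :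
    mm' j = mm j ∧ nn' j = nn j ∧ pathFrom B q I (nn j) = pathFrom B q I' (nn j) ∧
      I.val (sib (br u j (mm j))) = I'.val (sib (br u j (mm j))) := by
  have hpos := fun e (he : e < h - 2) => hI.bottleneck.pos he
  have hpath : ∀ n ≤ nn j, pathFrom B q I n = pathFrom B q I' n := fun n hle =>
    hI.path_eq hI' hJ hA fun e he heD =>
      ⟨hle.trans (hn e he heD).1, hle.trans (hn e he heD).2⟩
  obtain ⟨hL, -⟩ := hI.first j hj
  obtain ⟨hL', hmin'⟩ := hI'.first j hj
  have hlow : mm j = 0 → ∀ e < j, e ∈ D := by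
    intro h0 e he
    obtain ⟨n', hn', hq⟩ := hL.top h0
    obtain ⟨n1, hn1, m, h1⟩ :=
      hI.bottleneck.learns_below_spine j n' (by omega) hq e he
    by_contra heD
    have h2 := (hI.first e (by omega)).2 m n1 h1
    have h3 := (hn e (by omega) heD).1
    omega
  have hsib : I.val (sib (br u j (mm j))) = I'.val (sib (br u j (mm j))) := by
    rcases Nat.eq_zero_or_eq_succ_pred (mm j) with h0 | h1
    · refine hI.spine_agree hI' hJ hA (j := j) (by omega) (hlow h0) ⟨0, ?_⟩
      simp [h0, br, sib_sib]
    · rw [h1, hI.val_eq hJ fun s hs => not_desc_sib_br hpos hj hs,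
        hI'.val_eq hJ fun s hs => not_desc_sib_br hpos hj hs]
  have hLearn : Learns B I' q u j (mm j) (nn j) := by
    refine ⟨?_, ?_, ?_⟩
    · rw [← hpath _ le_rfl]
      exact hL.reveals.congr hsib
    · intro n' hn' hq
      have hlt : mm' j < mm j := by
        by_contra hle
        obtain ⟨d, hd⟩ := Nat.exists_eq_add_of_le (not_lt.1 hle)
        have hbr := (hL'.reveals.lt (by omega)).2
        obtain ⟨n1, hn1, hq1⟩ := hI'.bottleneck.queries_below hj (N := nn j)
          (fun m0 n0 hn0 hc => by
            have h1 := hmin' m0 n0 hc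
            have h2 := (hn j hj hjD).2
            omega) hn' hq d (by rwa [← hd])
        rw [← hd] at hq1
        exact hL'.fresh n1 (hn1.trans_le (hn j hj hjD).2) hq1
      have hmem : br u j (mm j) ∈ saved h u mm := mem_saved.2 (Or.inr ⟨j, hj, rfl⟩)
      refine hL.fresh n' hn' ?_
      rw [hpath n' hn'.le]
      refine hq.congr ?_ ?_
      · rw [← br_succ, hI'.val_eq hJ fun s hs => not_desc_br_of_lt hpos hj (by omega) hs,
          hI.val_eq hJ fun s hs => not_desc_br_of_lt hpos hj (by omega) hs]
      · have h1 : 2 * br u j (mm j) + 1 = sib (br u j (mm j + 1)) := by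
          rw [br_succ]; unfold sib; rw [if_pos (by omega)]
        rw [h1, hI'.val_eq hJ fun s hs => not_desc_sib_br hpos hj hs,
          hI.val_eq hJ fun s hs => not_desc_sib_br hpos hj hs]
    · intro h0
      obtain ⟨n', hn', hq⟩ := hL.top h0
      refine ⟨n', hn', ?_⟩
      rw [← hpath n' hn'.le]
      have hval : ∀ y, y / 2 = u / 2 ^ j → I.val y = I'.val y := by
        intro y hy
        exact hI.spine_agree hI' hJ hA (j := j) (by omega) (hlow h0) ⟨1, by simpa using hy⟩
      exact hq.congr (hval _ (by omega)) (hval _ (by omega))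
  have hnn : nn' j = nn j :=
    le_antisymm (hmin' _ _ hLearn) (hn j hj hjD).2
  refine ⟨?_, hnn, hpath _ le_rfl, hsib⟩
  rw [hnn] at hL'
  exact Learns.depth_unique (hpos j hj) hL'.reveals hLearn.reveals

theorem Decodes.eq_of_agree (hI : Decodes B q u J I mm nn) (hI' : Decodes B q u J I' mm' nn')
    (hJ : J.Regular) (hA : AgreeOn u D I I' mm mm') (hD : ∀ e < h - 2, e ∈ D) : I = I' := by
  have hf : I.f = I'.f := by
    funext i a b
    by_contra hne
    rcases hI.differ hI' hJ hA hne with ⟨e, he, heD, -⟩ | ⟨e, he, heD, -⟩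
    all_goals exact heD (hD e he)
  have hl : I.leaf = I'.leaf := by
    funext i
    rw [hI.regular.leaf_eq, hI'.regular.leaf_eq, hf]
  cases I; cases I'
  simp_all

end Decoding

/-! ### Counting -/

section Counting

open Finset

variable {h k : ℕ} {B : DetBP (TEVar h k) k Bool} {q : Fin B.size} {u : ℕ}

open Classical in
/-- The branches learned at exceptional states are at most as many as the exceptional nodes. -/
theorem card_exceptional_le {I : TEInput h k} {mm nn : ℕ → ℕ} {w : ℕ}
    (hI : Bottleneck B I q u) (hf : FirstLearns B I q u mm nn)
    (hfew : {i : ℕ | ∃ (t : ℕ) (hi : IsInternalNode h i) (a b : Fin k),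
        B.label (B.run I.evalVar t) = Sum.inl (TEVar.internal i hi a b) ∧
        (1 < (RightThrifty B (B.run I.evalVar t) i b).ncard ∨
         1 < (LeftThrifty B (B.run I.evalVar t) i a).ncard)}.ncard ≤ w) :
    #{e ∈ range (h - 2) | Exceptional B (pathFrom B q I (nn e))} ≤ w := by
  refine le_trans ?_ hfew
  rw [← Set.ncard_coe_finset]
  refine Set.ncard_le_ncard_of_injOn (fun e => br u e (mm e) / 2) ?_ ?_ ?_
  · intro e he
    obtain ⟨he, i, hi, a, b, hX, hexc⟩ := mem_filter.1 (mem_coe.1 he)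
    obtain ⟨hi', a', b', hX', -⟩ := (hf e (mem_range.1 he)).1.reveals
    obtain ⟨t, rfl⟩ := hI.visits
    rw [pathFrom_run] at hX hX' hexc
    have hX'' := hX'
    rw [hX] at hX''
    injection hX'' with hX''
    injection hX'' with h1 h2 h3
    subst h1
    exact ⟨_, hi, a, b, hX, hexc⟩
  · intro e he e' he' hee
    have he := hI.pos (mem_range.1 (mem_filter.1 (mem_coe.1 he)).1)
    have he' := hI.pos (mem_range.1 (mem_filter.1 (mem_coe.1 he')).1)
    simp only at hee
    generalize mm e = m, mm e' = m' at hee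
    cases m <;> cases m' <;> simp only [br_zero_half, br_succ_half] at hee
    · have := div_pow_inj he hee
      omega
    · exact absurd hee.symm (br_ne_spine he')
    · exact absurd hee (br_ne_spine he)
    · exact (br_inj he he' hee).1
  · exact (Set.finite_lt_nat (2 ^ (h - 1))).subset fun i ⟨_, hi, _⟩ => hi.2

variable [NeZero k]

open Classical in
/-- A family of inputs decoded from the same data, agreeing on the branches in `D`, has at most
`p ^ w` elements, where `w` bounds the number of exceptional states among those at which the
remaining branches are learned. -/
theorem card_le_pow_of_decodes {J : TEInput h k} (hJ : J.Regular) {p : ℕ} (hp : ThriftyBound B p)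
    (mm nn : TEInput h k → ℕ → ℕ) (N : ℕ) :
    ∀ (D : Finset ℕ) (w : ℕ) (F : Finset (TEInput h k)), #(range (h - 2) \ D) = N →
    (∀ I ∈ F, Decodes B q u J I (mm I) (nn I)) →
    (∀ I ∈ F, ∀ I' ∈ F, AgreeOn u D I I' (mm I) (mm I')) →
    (∀ I ∈ F, #{e ∈ range (h - 2) \ D | Exceptional B (pathFrom B q I (nn I e))} ≤ w) →
    1 ≤ p → #F ≤ p ^ w := by
  induction N with
  | zero =>
    intro D w F hN hF hA _ hp1
    have hD : ∀ e < h - 2, e ∈ D := by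
      intro e he
      rw [card_eq_zero, sdiff_eq_empty_iff_subset] at hN
      exact hN (mem_range.2 he)
    calc #F ≤ 1 := card_le_one.2 fun I hI I' hI' =>
          (hF I hI).eq_of_agree (hF I' hI') hJ (hA I hI I' hI') hD
      _ ≤ p ^ w := Nat.one_le_pow _ _ hp1
  | succ N ih =>
    intro D w F hN hF hA hw hp1
    rcases F.eq_empty_or_nonempty with rfl | hne
    · simp
    have hne' : (range (h - 2) \ D).Nonempty := card_pos.1 (by omega)
    obtain ⟨⟨I, j⟩, hIj, hmin⟩ := (F ×ˢ (range (h - 2) \ D)).exists_min_image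
      (fun x => nn x.1 x.2) (hne.product hne')
    obtain ⟨hI, hj⟩ := mem_product.1 hIj
    simp only at hI hj
    have hj' := hj
    rw [mem_sdiff, mem_range] at hj'
    obtain ⟨hj1, hjD⟩ := hj'
    have hmin' : ∀ I' ∈ F, ∀ e < h - 2, e ∉ D → nn I j ≤ nn I' e := fun I' hI' e he heD =>
      hmin (I', e) (mem_product.2 ⟨hI', mem_sdiff.2 ⟨mem_range.2 he, heD⟩⟩)
    have htr := fun I' hI' => (hF I hI).transfer (hF I' hI') hJ (hA I hI I' hI') hj1
      (fun e he heD => ⟨hmin' I hI e he heD, hmin' I' hI' e he heD⟩) hjD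
    set x := br u j (mm I j) with hx
    set q' := pathFrom B q I (nn I j) with hq'
    have hrev : Reveals B I q' x := ((hF I hI).first j hj1).1.reveals
    have himage : #(F.image fun I' => I'.val x) ≤ (candidates B q' x (I.val (sib x))).ncard := by
      rw [← Set.ncard_coe_finset]
      refine Set.ncard_le_ncard (fun c hc => ?_) (Set.toFinite _)
      obtain ⟨I', hI', rfl⟩ := mem_image.1 (mem_coe.1 hc)
      obtain ⟨-, -, h3, h4⟩ := htr I' hI'
      obtain ⟨t, ht⟩ := (hF I' hI').bottleneck.visits
      exact ⟨I', ⟨t + nn I j, by rw [h3, ← ht, pathFrom_run]⟩, rfl, h4.symm⟩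
    have hfib : ∀ w', (∀ I' ∈ F, #{e ∈ range (h - 2) \ insert j D |
        Exceptional B (pathFrom B q I' (nn I' e))} ≤ w') →
        #F ≤ p ^ w' * #(F.image fun I' => I'.val x) := by
      intro w' hw'
      refine card_le_mul_card_image _ _ fun c _ => ih (insert j D) w' _ ?_ ?_ ?_ ?_ hp1
      · rw [sdiff_insert, card_erase_of_mem hj, hN, Nat.add_sub_cancel]
      · exact fun I' hI' => hF I' (mem_filter.1 hI').1
      · intro I₁ hI₁ I₂ hI₂ e he heD
        obtain ⟨hF₁, hc₁⟩ := mem_filter.1 hI₁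
        obtain ⟨hF₂, hc₂⟩ := mem_filter.1 hI₂
        rcases mem_insert.1 heD with rfl | heD
        · rw [(htr I₁ hF₁).1, (htr I₂ hF₂).1]
          exact ⟨rfl, hc₁.trans hc₂.symm⟩
        · exact hA I₁ hF₁ I₂ hF₂ e he heD
      · exact fun I' hI' => hw' I' (mem_filter.1 hI').1
    by_cases hexc : Exceptional B q'
    · have hlt : ∀ I' ∈ F, #{e ∈ range (h - 2) \ insert j D |
          Exceptional B (pathFrom B q I' (nn I' e))} + 1 ≤ w := by
        intro I' hI'
        refine le_trans ?_ (hw I' hI')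
        obtain ⟨-, h2, h3, -⟩ := htr I' hI'
        rw [sdiff_insert, filter_erase, card_erase_add_one]
        exact mem_filter.2 ⟨hj, by rwa [h2, ← h3]⟩
      obtain ⟨w', rfl⟩ := Nat.exists_eq_add_of_le' (Nat.le_of_add_left_le (hlt I hI))
      calc #F ≤ p ^ w' * #(F.image fun I' => I'.val x) :=
            hfib w' fun I' hI' => Nat.le_of_add_le_add_right (hlt I' hI')
        _ ≤ p ^ w' * p := Nat.mul_le_mul_left _ (himage.trans (hrev.candidates_ncard_le hp))
        _ = p ^ (w' + 1) := (pow_succ _ _).symm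
    · calc #F ≤ p ^ w * #(F.image fun I' => I'.val x) := hfib w fun I' hI' =>
            (card_le_card (filter_subset_filter _
              (sdiff_subset_sdiff le_rfl (subset_insert _ _)))).trans (hw I' hI')
        _ ≤ p ^ w * 1 := Nat.mul_le_mul_left _ (himage.trans (hrev.candidates_ncard_le_one hexc))
        _ = p ^ w := mul_one _

/-- The regular input with the given function tables. -/
def ofTable (g : Fin (2 ^ h) → Fin k → Fin k → Fin k) : TEInput h k where
  f i a b := if hi : i < 2 ^ h then g ⟨i, hi⟩ a b else 0
  leaf i := if hi : i < 2 ^ h then g ⟨i, hi⟩ 0 0 else 0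

theorem ofTable_regular (g : Fin (2 ^ h) → Fin k → Fin k → Fin k) : (ofTable g).Regular where
  leaf_eq _ := rfl
  f_eq_zero i a b hi := by simp [ofTable, hi]

theorem ofTable_f (g : Fin (2 ^ h) → Fin k → Fin k → Fin k) (i : Fin (2 ^ h)) :
    (ofTable g).f i = g i := by
  funext a b
  simp [ofTable]

theorem ofTable_injective : Function.Injective (ofTable (h := h) (k := k)) := by
  intro g g' hg
  funext i
  rw [← ofTable_f g, hg, ofTable_f]

open Classical in
theorem pow_card_le_card_differsOn (g : Fin (2 ^ h) → Fin k → Fin k → Fin k) {S : Finset ℕ}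
    (hS : ∀ i ∈ S, i < 2 ^ h) :
    k ^ #S ≤ #{g' | DiffersOn S (ofTable g) (ofTable g')} := by
  have hcard : #(univ : Finset (S → Fin k)) = k ^ #S := by simp
  rw [← hcard]
  refine card_le_card_of_injOn (fun v i a b =>
    if hi : i.1 ∈ S ∧ a = (ofTable g).val (2 * i) ∧ b = (ofTable g).val (2 * i + 1)
    then v ⟨i, hi.1⟩ else g i a b) ?_ ?_
  · intro v _
    refine mem_coe.2 (mem_filter.2 ⟨mem_univ _, fun i a b hne => ?_⟩)
    by_contra hno
    refine hne ?_
    by_cases hi : i < 2 ^ h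
    · simp only [ofTable, dif_pos hi]
      exact dif_neg hno
    · simp [ofTable, hi]
  · intro v _ v' _ hv
    funext ⟨i, hi⟩
    have := congrFun (congrFun (congrFun hv ⟨i, hS i hi⟩) ((ofTable g).val (2 * i)))
      ((ofTable g).val (2 * i + 1))
    simpa [hi] using this

open Classical in
/-- A family of inputs sharing a bottleneck state has density at most `p ^ w / k ^ h`. -/
theorem card_mul_pow_le_of_bottleneck {p w : ℕ} (hh : 2 ≤ h) (hp1 : 1 ≤ p)
    (hp : ThriftyBound B p)
    (hfew : ∀ I : TEInput h k,
      {i : ℕ | ∃ (t : ℕ) (hi : IsInternalNode h i) (a b : Fin k),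
        B.label (B.run I.evalVar t) = Sum.inl (TEVar.internal i hi a b) ∧
        (1 < (RightThrifty B (B.run I.evalVar t) i b).ncard ∨
         1 < (LeftThrifty B (B.run I.evalVar t) i a).ncard)}.ncard ≤ w)
    (F : Finset (Fin (2 ^ h) → Fin k → Fin k → Fin k))
    (hF : ∀ g ∈ F, Bottleneck B (ofTable g) q u) :
    #F * k ^ h ≤ Fintype.card (Fin (2 ^ h) → Fin k → Fin k → Fin k) * p ^ w := by
  have hex : ∀ I : TEInput h k, ∃ mm nn, Bottleneck B I q u → FirstLearns B I q u mm nn := by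
    intro I
    by_cases hI : Bottleneck B I q u
    · obtain ⟨mm, nn, hf⟩ := hI.exists_firstLearns
      exact ⟨mm, nn, fun _ => hf⟩
    · exact ⟨0, 0, fun hI' => absurd hI' hI⟩
  choose mm nn hf using hex
  rw [← card_univ]
  refine card_mul_le_card_mul
    (fun g g' => DiffersOn (saved h u (mm (ofTable g))) (ofTable g) (ofTable g')) ?_ ?_
  · intro g hg
    have hb := hF g hg
    have hS : ∀ i ∈ saved h u (mm (ofTable g)), i < 2 ^ h := by
      intro i hi
      rcases mem_saved.1 hi with h1 | ⟨e, he, rfl⟩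
      · have h2 := hb.lt
        have h3 : 2 ^ h = 2 * 2 ^ (h - 1) := by rw [← pow_succ']; congr 1; omega
        omega
      · exact ((hf _ hb e he).1.reveals.lt (by omega)).2
    have := pow_card_le_card_differsOn g hS
    rwa [card_saved hh fun e he => hb.pos he] at this
  · intro g' _
    rw [← card_image_of_injective _ ofTable_injective]
    refine card_le_pow_of_decodes (q := q) (u := u) (ofTable_regular g') hp mm nn _ ∅ w _ rfl
      ?_ ?_ ?_ hp1
    · intro I hI
      obtain ⟨g, hg, rfl⟩ := mem_image.1 hI
      obtain ⟨hg, hd⟩ := mem_filter.1 hg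
      exact ⟨ofTable_regular g, hF g hg, hf _ (hF g hg), hd⟩
    · exact fun _ _ _ _ _ _ he => absurd he (notMem_empty _)
    · intro I hI
      obtain ⟨g, hg, rfl⟩ := mem_image.1 hI
      have hb := hF g (mem_filter.1 hg).1
      rw [sdiff_empty]
      exact card_exceptional_le hb (hf _ hb) (hfew _)

end Counting

/-- Let `h ≥ 2`, `k ≥ 2`, `1 ≤ π < k` and `w < h - 2`. If `B` is a
deterministic `k`-way branching program solving `BT^h_2(k)` such that (a) `|LeftThrifty(q)|
≤ π` and `|RightThrifty(q)| ≤ π` for every state `q` labeled with an internal node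
variable, and (b) for every input `I` there are at most `w` nodes `i` such that the
computation path of `I` visits a state `q` labeled with an `i`-variable with
`|RightThrifty(q)| > 1` or `|LeftThrifty(q)| > 1`, then `B` has at least `k^h / π^w`
states. -/
theorem stmt_18 (h k π w : ℕ) (hh : 2 ≤ h) (hk : 2 ≤ k) (hπ1 : 1 ≤ π) (hπk : π < k)
    (hw : w < h - 2)
    (B : DetBP (TEVar h k) k Bool) (hB : B.SolvesBT)
    (hbound : ∀ (q : Fin B.size) (i : ℕ) (hi : IsInternalNode h i) (a b : Fin k),
      B.label q = Sum.inl (TEVar.internal i hi a b) →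
      (LeftThrifty B q i a).ncard ≤ π ∧ (RightThrifty B q i b).ncard ≤ π)
    (hfew : ∀ I : TEInput h k,
      {i : ℕ | ∃ (t : ℕ) (hi : IsInternalNode h i) (a b : Fin k),
        B.label (B.run I.evalVar t) = Sum.inl (TEVar.internal i hi a b) ∧
        (1 < (RightThrifty B (B.run I.evalVar t) i b).ncard ∨
         1 < (LeftThrifty B (B.run I.evalVar t) i a).ncard)}.ncard ≤ w) :
    (k : ℝ) ^ h / (π : ℝ) ^ w ≤ (B.size : ℝ) := by
  classical
  have : NeZero k := ⟨by omega⟩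
  have hex := fun g : Fin (2 ^ h) → Fin k → Fin k → Fin k =>
    exists_bottleneck hk hπk (by omega) hB hbound (ofTable g)
  choose q u hq using hex
  have hfiber : ∀ s : Fin B.size, (Finset.univ.filter fun g => q g = s).card * k ^ h ≤
      Fintype.card (Fin (2 ^ h) → Fin k → Fin k → Fin k) * π ^ w := by
    intro s
    rcases (Finset.univ.filter fun g => q g = s).eq_empty_or_nonempty with h0 | ⟨g₀, hg₀⟩
    · simp [h0]
    refine card_mul_pow_le_of_bottleneck (q := s) (u := u g₀) hh hπ1 hbound hfew _ fun g hg => ?_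
    obtain rfl := (Finset.mem_filter.1 hg).2
    have h1 := hq g₀
    rw [(Finset.mem_filter.1 hg₀).2] at h1
    rw [h1.start.node_unique (hq g).start]
    exact hq g
  have hsum := Finset.sum_le_sum fun s (_ : s ∈ (Finset.univ : Finset (Fin B.size))) => hfiber s
  rw [← Finset.sum_mul, ← Finset.card_eq_sum_card_fiberwise fun g _ => Finset.mem_univ (q g),
    Finset.sum_const, Finset.card_univ, Finset.card_univ, Fintype.card_fin, smul_eq_mul,
    mul_left_comm] at hsum
  have hle := Nat.le_of_mul_le_mul_left hsum Fintype.card_pos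
  have hπ0 : (0 : ℝ) < (π : ℝ) ^ w := by positivity
  rw [div_le_iff₀ hπ0]
  exact_mod_cast hle
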